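/- arXiv:2206.11395 — 2 statements merged into one kernel-verified Lean document; each statement's English description precedes it below -/
import Mathlib

section
/- Let (Ω₁, μ) and (Ω₂, ν) be σ-finite measure spaces and let f : Ω₁ × Ω₂ → [0,∞) be measurable with ∫∫ f d(μ ⊗ ν) ≤ 1. Define the marginals f₁(v) := ∫ f(v,y) dν(y) and f₂(y) := ∫ f(v,y) dμ(v). Then for every γ ∈ ℝ, ∫∫ 𝟙{ f(v,y) > e^γ · f₁(v) · f₂(y) } · f₁(v) · f₂(y) d(μ ⊗ ν)(v,y) ≤ e^{−γ}. -/
open MeasureTheory Real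
open scoped ENNReal

/-- Averaged change-of-measure bound: if `f` is a (sub-)probability density on a product
space with marginals `f₁`, `f₂`, then the product-of-marginals measure of the set where
the information density exceeds `γ` is at most `exp (-γ)`. -/
theorem averaged_change_of_measure_bound {Ω₁ Ω₂ : Type*}
    [MeasurableSpace Ω₁] [MeasurableSpace Ω₂]
    (μ : Measure Ω₁) (ν : Measure Ω₂) [SigmaFinite μ] [SigmaFinite ν]
    (f : Ω₁ × Ω₂ → ℝ≥0∞) (hf : Measurable f)
    (hf1 : ∫⁻ p, f p ∂(μ.prod ν) ≤ 1) (γ : ℝ) :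
    ∫⁻ p in {p : Ω₁ × Ω₂ |
        f p > ENNReal.ofReal (Real.exp γ) * ((∫⁻ y, f (p.1, y) ∂ν) * (∫⁻ v, f (v, p.2) ∂μ))},
      (∫⁻ y, f (p.1, y) ∂ν) * (∫⁻ v, f (v, p.2) ∂μ) ∂(μ.prod ν)
        ≤ ENNReal.ofReal (Real.exp (-γ)) := by
  have hc : ENNReal.ofReal (Real.exp (-γ)) * ENNReal.ofReal (Real.exp γ) = 1 := by
    rw [← ENNReal.ofReal_mul (Real.exp_pos _).le, ← Real.exp_add]
    simp
  -- On the set of integration the product of marginals is dominated by `exp (-γ) * f`.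
  calc
    _ ≤ ∫⁻ p in {p : Ω₁ × Ω₂ |
        f p > ENNReal.ofReal (Real.exp γ) * ((∫⁻ y, f (p.1, y) ∂ν) * (∫⁻ v, f (v, p.2) ∂μ))},
        ENNReal.ofReal (Real.exp (-γ)) * f p ∂(μ.prod ν) := by
      refine setLIntegral_mono (hf.const_mul _) fun p hp => ?_
      have h := mul_le_mul_right (le_of_lt hp) (ENNReal.ofReal (Real.exp (-γ)))
      rwa [← mul_assoc, hc, one_mul] at h
    _ ≤ ∫⁻ p, ENNReal.ofReal (Real.exp (-γ)) * f p ∂(μ.prod ν) := setLIntegral_le_lintegral _ _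
    _ = ENNReal.ofReal (Real.exp (-γ)) * ∫⁻ p, f p ∂(μ.prod ν) := lintegral_const_mul _ hf
    _ ≤ ENNReal.ofReal (Real.exp (-γ)) := mul_le_of_le_one_right' hf1
end

section
/- Let n ≥ 3 and R > 0, let X be a random vector distributed according to the uniform probability measure on the sphere {x ∈ ℝⁿ : ‖x‖ = R} (the unique rotation-invariant Borel probability measure on this sphere), and let X₁ denote its first coordinate. Let c ∈ ℝ, L ≥ 0 and B ∈ [0, R] satisfy |c| ≤ B and |c + L| ≤ B. Then Pr[ c ≤ X₁ ≤ c + L ] ≥ L · (1/(√π · R)) · (Γ(n/2)/Γ((n−1)/2)) · (1 − B²/R²)^{(n−3)/2}, where Γ denotes the Gamma function. -/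
/-!
The law of the first coordinate under `U` is found by comparing `U` with Lebesgue measure `λ` on
the unit ball. Pair independent vectors `x` (law `U`) and `y` (law `λ`): conditionally on `y`, the
cosine of their angle is distributed as `x 0 / ‖x‖`, and conditionally on `x` it is distributed as
`y 0 / ‖y‖`, by rotation invariance of both measures. So the two cosines have the same law
(`lintegral_cosine_eq`), and no uniqueness theorem for the invariant measure on the sphere is needed.

For Lebesgue measure in dimension `k + 3`, a one-dimensional substitution along the first axis and
a rescaling of the other coordinates show that the law of the cosine has density proportional
to `√(1 - s ^ 2) ^ k` on `(-1, 1)` (`lintegral_cosine_volume`). Its total mass is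
`√π * Γ(k / 2 + 1) / Γ(k / 2 + 3 / 2)` (`lintegral_density`). As `‖x‖ = R` almost surely under `U`,
the bound follows because this density decreases in `|s|`.
-/

open MeasureTheory Real
open scoped ENNReal

/-- For a fixed distance `r` to the first axis, parametrizes the position `t` along that axis by
the cosine `s = t / √(t ^ 2 + r ^ 2)`. -/
lemma lintegral_eq_lintegral_cosine {r : ℝ} (hr : 0 < r) (H : ℝ → ℝ≥0∞) :
    ∫⁻ t, H t = ∫⁻ s in Set.Ioo (-1 : ℝ) 1,
      ENNReal.ofReal (r * ((√(1 - s ^ 2))⁻¹) ^ 3) * H (r * s / √(1 - s ^ 2)) := by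
  have hpos : ∀ s ∈ Set.Ioo (-1 : ℝ) 1, 0 < 1 - s ^ 2 := fun s hs => by
    nlinarith [hs.1, hs.2]
  have hd : ∀ s ∈ Set.Ioo (-1 : ℝ) 1,
      HasDerivWithinAt (fun s => r * s / √(1 - s ^ 2)) (r * ((√(1 - s ^ 2))⁻¹) ^ 3)
        (Set.Ioo (-1 : ℝ) 1) s := by
    intro s hs
    have h := hpos s hs
    have hq : 0 < √(1 - s ^ 2) := Real.sqrt_pos.2 h
    have hsq : √(1 - s ^ 2) ^ 2 = 1 - s ^ 2 := Real.sq_sqrt h.le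
    have h1 : HasDerivAt (fun s : ℝ => 1 - s ^ 2) (-(2 * s)) s := by
      simpa using ((hasDerivAt_id s).pow 2).const_sub 1
    have h2 := (((hasDerivAt_id s).const_mul r).div (h1.sqrt h.ne') hq.ne').hasDerivWithinAt
      (s := Set.Ioo (-1 : ℝ) 1)
    refine h2.congr_deriv ?_
    simp only [id]
    field_simp
    rw [hsq]; ring
  -- `t ↦ t / √(t ^ 2 + r ^ 2)` inverts the substitution
  have hinv : ∀ s ∈ Set.Ioo (-1 : ℝ) 1,
      (r * s / √(1 - s ^ 2)) / √((r * s / √(1 - s ^ 2)) ^ 2 + r ^ 2) = s := by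
    intro s hs
    have h := hpos s hs
    have hq : 0 < √(1 - s ^ 2) := Real.sqrt_pos.2 h
    have hsq : √(1 - s ^ 2) ^ 2 = 1 - s ^ 2 := Real.sq_sqrt h.le
    have : (r * s / √(1 - s ^ 2)) ^ 2 + r ^ 2 = (r / √(1 - s ^ 2)) ^ 2 := by
      field_simp
      rw [hsq]; ring
    rw [this, Real.sqrt_sq (by positivity)]
    field_simp
  have himg : (fun s => r * s / √(1 - s ^ 2)) '' Set.Ioo (-1 : ℝ) 1 = Set.univ := by
    refine Set.eq_univ_of_forall fun t => ?_
    have hp : 0 < t ^ 2 + r ^ 2 := by positivity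
    have hq : 0 < √(t ^ 2 + r ^ 2) := Real.sqrt_pos.2 hp
    have hsq : √(t ^ 2 + r ^ 2) ^ 2 = t ^ 2 + r ^ 2 := Real.sq_sqrt hp.le
    have habs : |t| < √(t ^ 2 + r ^ 2) := by
      rw [← Real.sqrt_sq_eq_abs]
      exact Real.sqrt_lt_sqrt (by positivity) (by nlinarith)
    refine ⟨t / √(t ^ 2 + r ^ 2), ⟨?_, ?_⟩, ?_⟩
    · rw [lt_div_iff₀ hq]; linarith [neg_abs_le t]
    · rw [div_lt_iff₀ hq]; linarith [le_abs_self t]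
    · have : 1 - (t / √(t ^ 2 + r ^ 2)) ^ 2 = (r / √(t ^ 2 + r ^ 2)) ^ 2 := by
        field_simp
        rw [hsq]; ring
      simp only [this]
      rw [Real.sqrt_sq (by positivity)]
      field_simp
  have key := lintegral_image_eq_lintegral_abs_deriv_mul measurableSet_Ioo hd
    (fun a ha b hb hab => by rw [← hinv a ha, ← hinv b hb]; simp only [] at hab; rw [hab]) H
  rw [himg, Measure.restrict_univ] at key
  rw [key]
  refine setLIntegral_congr_fun measurableSet_Ioo fun s hs => ?_
  rw [abs_of_nonneg (by positivity)]

/-- Separates the first coordinate from the remaining ones. -/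
noncomputable def splitFirst (m : ℕ) (y : EuclideanSpace ℝ (Fin (m + 1))) :
    ℝ × EuclideanSpace ℝ (Fin m) :=
  (y 0, WithLp.toLp 2 fun i => y i.succ)

lemma measurePreserving_splitFirst (m : ℕ) : MeasurePreserving (splitFirst m) := by
  have h1 := PiLp.volume_preserving_ofLp (Fin (m + 1))
  have h2 := volume_preserving_piFinSuccAbove (fun _ : Fin (m + 1) => ℝ) 0
  have h3 := (MeasurePreserving.id (volume : Measure ℝ)).prod
    (PiLp.volume_preserving_toLp (Fin m))
  exact (h3.comp h2).comp h1

lemma norm_eq_splitFirst {m : ℕ} (y : EuclideanSpace ℝ (Fin (m + 1))) :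
    ‖y‖ = √((splitFirst m y).1 ^ 2 + ‖(splitFirst m y).2‖ ^ 2) := by
  rw [EuclideanSpace.real_norm_sq_eq, EuclideanSpace.norm_eq, Fin.sum_univ_succ]
  simp [splitFirst]

/-- The substitution `z = a • w` in dimension `m`: the factor `a ^ m` is the Jacobian, and the
remaining factor `a` comes from `‖z‖ = a * ‖w‖`. -/
lemma lintegral_scaled {m : ℕ} {g : ℝ → ℝ≥0∞} {a : ℝ} (ha : 0 < a) :
    ∫⁻ z : EuclideanSpace ℝ (Fin m), ENNReal.ofReal ‖z‖ * g (‖z‖ / a) =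
      ENNReal.ofReal (a ^ (m + 1)) *
        ∫⁻ w : EuclideanSpace ℝ (Fin m), ENNReal.ofReal ‖w‖ * g ‖w‖ := by
  have h := Measure.map_addHaar_smul (volume : Measure (EuclideanSpace ℝ (Fin m)))
    (inv_ne_zero ha.ne')
  have h2 : ∫⁻ w, ENNReal.ofReal (a * ‖w‖) * g ‖w‖
      ∂(Measure.map (a⁻¹ • ·) (volume : Measure (EuclideanSpace ℝ (Fin m)))) =
      ∫⁻ z : EuclideanSpace ℝ (Fin m), ENNReal.ofReal ‖z‖ * g (‖z‖ / a) := by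
    have he : MeasurableEmbedding fun x : EuclideanSpace ℝ (Fin m) => a⁻¹ • x :=
      (Homeomorph.smulOfNeZero a⁻¹ (inv_ne_zero ha.ne')).measurableEmbedding
    rw [he.lintegral_map]
    refine lintegral_congr fun z => ?_
    simp only [norm_smul, norm_inv, Real.norm_eq_abs,
      abs_of_pos ha]
    rw [mul_inv_cancel_left₀ ha.ne', inv_mul_eq_div]
  rw [← h2, h, lintegral_smul_measure]
  simp_rw [ENNReal.ofReal_mul ha.le, mul_assoc]
  rw [lintegral_const_mul' _ _ ENNReal.ofReal_ne_top, smul_eq_mul, ← mul_assoc,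
    ← ENNReal.ofReal_mul (by positivity)]
  congr 2
  rw [finrank_euclideanSpace_fin, abs_of_pos (by positivity)]
  simp [pow_succ]

/-- For Lebesgue measure in dimension `k + 3`, weighted by a radial function, the cosine
`y 0 / ‖y‖` has density proportional to `√(1 - s ^ 2) ^ k`. For fixed remaining coordinates `z`, the
cosine substitution contributes `‖z‖ * √(1 - s ^ 2) ^ (-3)` and turns `‖y‖` into
`‖z‖ / √(1 - s ^ 2)`; rescaling `z` then contributes `√(1 - s ^ 2) ^ (k + 3)`. -/
lemma lintegral_cosine_volume {k : ℕ} {Φ g : ℝ → ℝ≥0∞} (hΦ : Measurable Φ) (hg : Measurable g) :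
    ∫⁻ y : EuclideanSpace ℝ (Fin (k + 3)), Φ (y 0 / ‖y‖) * g ‖y‖ =
      (∫⁻ w : EuclideanSpace ℝ (Fin (k + 2)), ENNReal.ofReal ‖w‖ * g ‖w‖) *
        ∫⁻ s in Set.Ioo (-1 : ℝ) 1, Φ s * ENNReal.ofReal (√(1 - s ^ 2) ^ k) := by
  have e1 : ∫⁻ y : EuclideanSpace ℝ (Fin (k + 3)), Φ (y 0 / ‖y‖) * g ‖y‖ =
      ∫⁻ z : EuclideanSpace ℝ (Fin (k + 2)), ∫⁻ t : ℝ,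
        Φ (t / √(t ^ 2 + ‖z‖ ^ 2)) * g √(t ^ 2 + ‖z‖ ^ 2) := by
    have hm : Measurable fun p : ℝ × EuclideanSpace ℝ (Fin (k + 2)) =>
        Φ (p.1 / √(p.1 ^ 2 + ‖p.2‖ ^ 2)) * g √(p.1 ^ 2 + ‖p.2‖ ^ 2) := by fun_prop
    have := lintegral_prod_symm' (μ := volume) (ν := volume) _ hm
    rw [← this, ← Measure.volume_eq_prod,
      ← (measurePreserving_splitFirst (k + 2)).lintegral_comp hm]
    refine lintegral_congr fun y => ?_
    rw [norm_eq_splitFirst]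
    rfl
  have e2 : ∀ᵐ z : EuclideanSpace ℝ (Fin (k + 2)), ∫⁻ t : ℝ,
        Φ (t / √(t ^ 2 + ‖z‖ ^ 2)) * g √(t ^ 2 + ‖z‖ ^ 2) =
      ∫⁻ s in Set.Ioo (-1 : ℝ) 1, Φ s * ENNReal.ofReal (((√(1 - s ^ 2))⁻¹) ^ 3) *
        (ENNReal.ofReal ‖z‖ * g (‖z‖ / √(1 - s ^ 2))) := by
    filter_upwards [Measure.ae_ne volume (0 : EuclideanSpace ℝ (Fin (k + 2)))] with z hz
    have hr : 0 < ‖z‖ := norm_pos_iff.2 hz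
    rw [lintegral_eq_lintegral_cosine hr]
    refine setLIntegral_congr_fun measurableSet_Ioo fun s hs => ?_
    have h : 0 < 1 - s ^ 2 := by nlinarith [hs.1, hs.2]
    have hq : 0 < √(1 - s ^ 2) := Real.sqrt_pos.2 h
    have hsq : √(1 - s ^ 2) ^ 2 = 1 - s ^ 2 := Real.sq_sqrt h.le
    have h3 : (‖z‖ * s / √(1 - s ^ 2)) ^ 2 + ‖z‖ ^ 2 = (‖z‖ / √(1 - s ^ 2)) ^ 2 := by
      field_simp
      rw [hsq]; ring
    have h4 : ‖z‖ * s / √(1 - s ^ 2) / (‖z‖ / √(1 - s ^ 2)) = s := by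
      field_simp
    rw [h3, Real.sqrt_sq (by positivity), h4, ENNReal.ofReal_mul hr.le]
    ring
  rw [e1, lintegral_congr_ae e2, lintegral_lintegral_swap (by fun_prop),
    ← lintegral_const_mul _ (by fun_prop)]
  refine setLIntegral_congr_fun measurableSet_Ioo fun s hs => ?_
  have h : 0 < 1 - s ^ 2 := by nlinarith [hs.1, hs.2]
  have hq : 0 < √(1 - s ^ 2) := Real.sqrt_pos.2 h
  rw [lintegral_const_mul _ (by fun_prop), lintegral_scaled hq]
  have : √(1 - s ^ 2) ^ k = ((√(1 - s ^ 2))⁻¹) ^ 3 * √(1 - s ^ 2) ^ (k + 2 + 1) := by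
    field_simp
    ring
  rw [this, ENNReal.ofReal_mul (by positivity)]
  ring

/-- Under a rotation-invariant measure, the cosine of the angle to `u` has the same law as the
cosine of the angle to the first basis vector, because a reflection exchanges the two directions. -/
lemma lintegral_inner_of_rotation_invariant {n : ℕ} (ν : Measure (EuclideanSpace ℝ (Fin (n + 1))))
    (hrot : ∀ T : EuclideanSpace ℝ (Fin (n + 1)) ≃ₗᵢ[ℝ] EuclideanSpace ℝ (Fin (n + 1)),
      Measure.map T ν = ν)
    (Φ g : ℝ → ℝ≥0∞) {u : EuclideanSpace ℝ (Fin (n + 1))} (hu : u ≠ 0) :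
    ∫⁻ x, Φ (inner ℝ x u / (‖x‖ * ‖u‖)) * g ‖x‖ ∂ν = ∫⁻ x, Φ (x 0 / ‖x‖) * g ‖x‖ ∂ν := by
  have hu' : ‖u‖ ≠ 0 := norm_ne_zero_iff.2 hu
  have hn : ‖u‖ = ‖EuclideanSpace.single (0 : Fin (n + 1)) ‖u‖‖ := by simp
  set T := (ℝ ∙ (u - EuclideanSpace.single (0 : Fin (n + 1)) ‖u‖))ᗮ.reflection with hT
  have hTu : T u = EuclideanSpace.single (0 : Fin (n + 1)) ‖u‖ := Submodule.reflection_sub hn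
  conv_rhs => rw [← hrot T]
  have he : MeasurableEmbedding T := T.toHomeomorph.measurableEmbedding
  rw [he.lintegral_map]
  refine lintegral_congr fun x => ?_
  have h1 : inner ℝ x u = ‖u‖ * (T x) 0 := by
    rw [← T.inner_map_map x u, hTu, EuclideanSpace.inner_single_right]
    simp
  rw [h1, T.norm_map, mul_comm ‖u‖, mul_div_mul_right _ _ hu']

/-- The law of `x 0 / ‖x‖` is the same for every rotation-invariant probability measure without
atom at `0`; the comparison is with Lebesgue measure weighted by a radial function. Both sides
equal the integral over independent `x`, `y` of a function of the cosine of their angle: integrate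
first in `x` for the left side, first in `y` for the right side. -/
lemma lintegral_cosine_eq {n : ℕ} (U : Measure (EuclideanSpace ℝ (Fin (n + 1))))
    [IsProbabilityMeasure U] (h0 : U {0} = 0)
    (hrot : ∀ T : EuclideanSpace ℝ (Fin (n + 1)) ≃ₗᵢ[ℝ] EuclideanSpace ℝ (Fin (n + 1)),
      Measure.map T U = U)
    {Φ g : ℝ → ℝ≥0∞} (hΦ : Measurable Φ) (hg : Measurable g) :
    (∫⁻ y : EuclideanSpace ℝ (Fin (n + 1)), g ‖y‖) * ∫⁻ x, Φ (x 0 / ‖x‖) ∂U =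
      ∫⁻ y : EuclideanSpace ℝ (Fin (n + 1)), Φ (y 0 / ‖y‖) * g ‖y‖ := by
  have hx : ∀ᵐ x ∂U, x ≠ 0 := by
    rw [ae_iff]; simpa using h0
  have e1 : ∫⁻ x, (∫⁻ y : EuclideanSpace ℝ (Fin (n + 1)),
      Φ (inner ℝ y x / (‖y‖ * ‖x‖)) * g ‖y‖) ∂U =
      ∫⁻ y : EuclideanSpace ℝ (Fin (n + 1)), Φ (y 0 / ‖y‖) * g ‖y‖ := by
    have : ∀ᵐ x ∂U, ∫⁻ y : EuclideanSpace ℝ (Fin (n + 1)),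
        Φ (inner ℝ y x / (‖y‖ * ‖x‖)) * g ‖y‖ =
        ∫⁻ y : EuclideanSpace ℝ (Fin (n + 1)), Φ (y 0 / ‖y‖) * g ‖y‖ := by
      filter_upwards [hx] with x hx
      exact lintegral_inner_of_rotation_invariant volume
        (fun T => T.measurePreserving.map_eq) Φ g hx
    rw [lintegral_congr_ae this]
    simp
  rw [← e1, lintegral_lintegral_swap (by fun_prop), ← lintegral_mul_const _ (by fun_prop)]
  refine lintegral_congr_ae ?_
  filter_upwards [Measure.ae_ne volume (0 : EuclideanSpace ℝ (Fin (n + 1)))] with y hy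
  rw [lintegral_mul_const _ (by fun_prop), mul_comm]
  have := lintegral_inner_of_rotation_invariant U hrot Φ (fun _ => 1) hy
  simp only [mul_one] at this
  rw [← this]
  congr 1
  refine lintegral_congr fun x => ?_
  rw [real_inner_comm, mul_comm ‖x‖]

/-- The normalizing constant, from the Beta integral (with `s = 2 * u - 1`) and the duplication
formula for `Γ`. -/
lemma lintegral_density (k : ℕ) :
    ∫⁻ s in Set.Ioo (-1 : ℝ) 1, ENNReal.ofReal (√(1 - s ^ 2) ^ k) =
      ENNReal.ofReal (√π * Gamma ((k : ℝ) / 2 + 1) / Gamma ((k : ℝ) / 2 + 1 + 1 / 2)) := by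
  have ha : (0 : ℝ) < (k : ℝ) / 2 + 1 := by positivity
  have hb := ProbabilityTheory.beta_pos ha ha
  have hone := ProbabilityTheory.lintegral_betaPDF_eq_one ha ha
  rw [ProbabilityTheory.lintegral_betaPDF] at hone
  set β := ProbabilityTheory.beta ((k : ℝ) / 2 + 1) ((k : ℝ) / 2 + 1) with hβ
  have himg : (fun u : ℝ => 2 * u - 1) '' Set.Ioo 0 1 = Set.Ioo (-1) 1 := by
    ext s
    constructor
    · rintro ⟨u, hu, rfl⟩
      constructor <;> simp only [] <;> linarith [hu.1, hu.2]
    · intro hs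
      exact ⟨(s + 1) / 2, ⟨by linarith [hs.1], by linarith [hs.2]⟩, by simp only []; ring⟩
  have key := lintegral_image_eq_lintegral_abs_deriv_mul (s := Set.Ioo (0 : ℝ) 1)
    (f := fun u : ℝ => 2 * u - 1) (f' := fun _ => 2) measurableSet_Ioo
    (fun u _ => by
      simpa using (((hasDerivAt_id u).const_mul 2).sub_const 1).hasDerivWithinAt)
    (fun a _ b _ hab => by simp only [] at hab; linarith)
    (fun s => ENNReal.ofReal (√(1 - s ^ 2) ^ k))
  rw [himg] at key
  rw [key]
  have hpt : ∀ u ∈ Set.Ioo (0 : ℝ) 1,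
      ENNReal.ofReal |2| * ENNReal.ofReal (√(1 - (2 * u - 1) ^ 2) ^ k) =
      ENNReal.ofReal (2 ^ (k + 1) * β) * ENNReal.ofReal
        (1 / β * u ^ ((k : ℝ) / 2 + 1 - 1) * (1 - u) ^ ((k : ℝ) / 2 + 1 - 1)) := by
    intro u hu
    have h0 := hu.1
    have h1 : 0 < 1 - u := by linarith [hu.2]
    rw [← ENNReal.ofReal_mul (by positivity), ← ENNReal.ofReal_mul (by positivity)]
    congr 1
    have hs : 1 - (2 * u - 1) ^ 2 = 2 ^ 2 * (u * (1 - u)) := by ring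
    have hp : u ^ ((k : ℝ) / 2) * (1 - u) ^ ((k : ℝ) / 2) = √(u * (1 - u)) ^ k := by
      rw [← Real.mul_rpow h0.le h1.le, Real.sqrt_eq_rpow, ← Real.rpow_mul_natCast (by positivity)]
      congr 1; ring
    rw [hs, Real.sqrt_mul (by positivity), Real.sqrt_sq (by norm_num), mul_pow, ← hp,
      add_sub_cancel_right, abs_of_pos (by norm_num)]
    field_simp
    ring
  rw [setLIntegral_congr_fun measurableSet_Ioo hpt,
    lintegral_const_mul' _ _ ENNReal.ofReal_ne_top, hone, mul_one]
  congr 1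
  have hdup := Real.Gamma_mul_Gamma_add_half ((k : ℝ) / 2 + 1)
  have hG1 := Real.Gamma_pos_of_pos ha
  have hG2 : 0 < Gamma ((k : ℝ) / 2 + 1 + 1 / 2) := Real.Gamma_pos_of_pos (by positivity)
  have hG3 : 0 < Gamma (2 * ((k : ℝ) / 2 + 1)) := Real.Gamma_pos_of_pos (by positivity)
  have h2 : (2 : ℝ) ^ (1 - 2 * ((k : ℝ) / 2 + 1)) = (2 ^ (k + 1))⁻¹ := by
    rw [← Real.rpow_natCast, ← Real.rpow_neg (by norm_num)]
    congr 1; push_cast; ring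
  rw [h2] at hdup
  rw [hβ, ProbabilityTheory.beta, ← two_mul]
  field_simp at hdup ⊢
  linear_combination hdup

/-- Lower bound (equation (34) of the paper) on the probability that the first coordinate
of a uniform random point on the sphere of radius `R` in `ℝⁿ` (`n ≥ 3`) falls in an
interval `[c, c + L]` contained in `[−B, B]`: it is at least the interval length `L`
times the value of the marginal density at `B`. -/
theorem sphere_first_coordinate_interval_lower_bound {n : ℕ} (hn : 3 ≤ n)
    (R : ℝ) (hR : 0 < R)
    (U : Measure (EuclideanSpace ℝ (Fin n))) [IsProbabilityMeasure U]
    (hsupp : U (Metric.sphere (0 : EuclideanSpace ℝ (Fin n)) R)ᶜ = 0)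
    (hrot : ∀ T : EuclideanSpace ℝ (Fin n) ≃ₗᵢ[ℝ] EuclideanSpace ℝ (Fin n),
      Measure.map T U = U)
    (c L B : ℝ) (hL : 0 ≤ L) (hB0 : 0 ≤ B) (hBR : B ≤ R)
    (hc : |c| ≤ B) (hcL : |c + L| ≤ B) :
    ENNReal.ofReal (L * ((1 / (Real.sqrt π * R))
        * (Real.Gamma ((n : ℝ) / 2) / Real.Gamma (((n : ℝ) - 1) / 2))
        * (1 - B ^ 2 / R ^ 2) ^ (((n : ℝ) - 3) / 2)))
      ≤ U {x : EuclideanSpace ℝ (Fin n) |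
            c ≤ x ⟨0, by omega⟩ ∧ x ⟨0, by omega⟩ ≤ c + L} := by
  obtain ⟨k, rfl⟩ : ∃ k, n = k + 3 := ⟨n - 3, by omega⟩
  have hz : (⟨0, by omega⟩ : Fin (k + 3)) = 0 := rfl
  rw [hz]
  have hB1 : 0 ≤ 1 - B ^ 2 / R ^ 2 := by
    rw [sub_nonneg, div_le_one (by positivity)]
    gcongr
  have hn3 : (((k + 3 : ℕ) : ℝ) - 3) / 2 = (k : ℝ) / 2 := by push_cast; ring
  have hn1 : (((k + 3 : ℕ) : ℝ) - 1) / 2 = (k : ℝ) / 2 + 1 := by push_cast; ring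
  have hn0 : ((k + 3 : ℕ) : ℝ) / 2 = (k : ℝ) / 2 + 1 + 1 / 2 := by push_cast; ring
  have hpow : (1 - B ^ 2 / R ^ 2) ^ ((k : ℝ) / 2) = √(1 - B ^ 2 / R ^ 2) ^ k := by
    rw [Real.sqrt_eq_rpow, ← Real.rpow_mul_natCast hB1]
    congr 1; ring
  rw [hn3, hn1, hn0, hpow]
  have hsph : ∀ᵐ x ∂U, ‖x‖ = R := by
    rw [ae_iff]
    convert! hsupp using 2
    ext x; simp
  have h0 : U {0} = 0 := by
    refine measure_mono_null ?_ hsupp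
    rintro x rfl
    simpa using hR.ne
  set A : Set ℝ := Set.Icc (c / R) ((c + L) / R) with hA
  set g : ℝ → ℝ≥0∞ := (Set.Iic (1 : ℝ)).indicator 1 with hg
  have hgm : Measurable g := measurable_one.indicator measurableSet_Iic
  have hΦm : Measurable (A.indicator (1 : ℝ → ℝ≥0∞)) := measurable_one.indicator measurableSet_Icc
  set M := ∫⁻ y : EuclideanSpace ℝ (Fin (k + 3)), g ‖y‖ with hM
  have hMvol : M = volume (Metric.closedBall (0 : EuclideanSpace ℝ (Fin (k + 3))) 1) := by
    rw [hM, ← lintegral_indicator_one Metric.isClosed_closedBall.measurableSet]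
    refine lintegral_congr fun y => ?_
    by_cases hy : ‖y‖ ≤ 1
    · rw [hg, Set.indicator_of_mem (Set.mem_Iic.2 hy),
        Set.indicator_of_mem (mem_closedBall_zero_iff.2 hy)]
      rfl
    · rw [hg, Set.indicator_of_notMem (mt Set.mem_Iic.1 hy),
        Set.indicator_of_notMem (mt mem_closedBall_zero_iff.1 hy)]
  have hM0 : M ≠ 0 := by
    rw [hMvol]; exact (Metric.measure_closedBall_pos _ _ one_pos).ne'
  have hMtop : M ≠ ⊤ := by
    rw [hMvol]; exact measure_closedBall_lt_top.ne
  have hU : ∫⁻ x, A.indicator 1 (x 0 / ‖x‖) ∂U =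
      U {x : EuclideanSpace ℝ (Fin (k + 3)) | c ≤ x 0 ∧ x 0 ≤ c + L} := by
    have hms : MeasurableSet {x : EuclideanSpace ℝ (Fin (k + 3)) | c ≤ x 0 ∧ x 0 ≤ c + L} := by
      measurability
    rw [← lintegral_indicator_one hms]
    refine lintegral_congr_ae ?_
    filter_upwards [hsph] with x hx
    rw [hx]
    simp only [Set.indicator_apply, hA, Set.mem_Icc, Set.mem_ofPred_eq,
      div_le_div_iff_of_pos_right hR]
    rfl
  have hmain := lintegral_cosine_eq U h0 hrot hΦm hgm
  have htot := lintegral_cosine_volume (k := k) (Φ := fun _ => 1) measurable_const hgm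
  simp only [one_mul] at htot
  rw [← hM] at htot
  rw [lintegral_cosine_volume hΦm hgm, hU, ← hM, htot] at hmain
  set C := ∫⁻ w : EuclideanSpace ℝ (Fin (k + 2)), ENNReal.ofReal ‖w‖ * g ‖w‖ with hC
  rw [lintegral_density] at htot hmain
  set I := √π * Gamma ((k : ℝ) / 2 + 1) / Gamma ((k : ℝ) / 2 + 1 + 1 / 2) with hI
  have hG1 : 0 < Gamma ((k : ℝ) / 2 + 1) := Real.Gamma_pos_of_pos (by positivity)
  have hG2 : 0 < Gamma ((k : ℝ) / 2 + 1 + 1 / 2) := Real.Gamma_pos_of_pos (by positivity)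
  have hIpos : 0 < I := by positivity
  have hC0 : C ≠ 0 := by
    intro h; rw [h, zero_mul] at htot; exact hM0 htot
  have hCtop : C ≠ ⊤ := by
    intro h
    rw [h, ENNReal.top_mul (by simpa using hIpos)] at htot
    exact hMtop htot
  rw [mul_assoc] at hmain
  have hfin := (ENNReal.mul_right_inj hC0 hCtop).1 hmain
  have hlow : ENNReal.ofReal (√(1 - B ^ 2 / R ^ 2) ^ k) * ENNReal.ofReal (L / R) ≤
      ∫⁻ s in Set.Ioo (-1 : ℝ) 1, A.indicator 1 s * ENNReal.ofReal (√(1 - s ^ 2) ^ k) := by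
    have hlo : -B / R ≤ c / R := by gcongr; exact (abs_le.1 hc).1
    have hhi : (c + L) / R ≤ B / R := by gcongr; exact (abs_le.1 hcL).2
    have hB' : B / R ≤ 1 := (div_le_one hR).2 hBR
    rw [neg_div] at hlo
    -- the open interval avoids the endpoints `±1`, which are attained when `B = R`
    have hsub : Set.Ioo (c / R) ((c + L) / R) ⊆ Set.Ioo (-1 : ℝ) 1 :=
      Set.Ioo_subset_Ioo (by linarith) (by linarith)
    calc _ = ∫⁻ s in Set.Ioo (c / R) ((c + L) / R),
            ENNReal.ofReal (√(1 - B ^ 2 / R ^ 2) ^ k) := by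
          rw [setLIntegral_const, Real.volume_Ioo]
          congr 2; ring
      _ ≤ ∫⁻ s in Set.Ioo (c / R) ((c + L) / R),
            A.indicator 1 s * ENNReal.ofReal (√(1 - s ^ 2) ^ k) := by
          refine setLIntegral_mono' measurableSet_Ioo fun s hs => ?_
          rw [Set.indicator_of_mem (Set.Ioo_subset_Icc_self hs), Pi.one_apply, one_mul]
          gcongr
          rw [← div_pow, sq_le_sq, abs_of_nonneg (by positivity : 0 ≤ B / R)]
          exact abs_le.2 ⟨by linarith [hs.1], by linarith [hs.2]⟩
      _ ≤ _ := lintegral_mono_set hsub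
  rw [← hfin, ← ENNReal.ofReal_mul (by positivity)] at hlow
  have hI0 : ENNReal.ofReal I ≠ 0 := by simpa using hIpos
  rw [← ENNReal.mul_le_mul_iff_right hI0 ENNReal.ofReal_ne_top]
  refine le_trans (le_of_eq ?_) hlow
  rw [← ENNReal.ofReal_mul hIpos.le]
  congr 1
  rw [hI]
  field_simp
end
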